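/- arXiv:2310.00376 — 3 statements merged into one kernel-verified Lean document; each statement's English description precedes it below -/
import Mathlib

section
/- (One-step descent inequality, Lemma 3.1.) Assume the IADMM setting. Then for every k ≥ 2 and every (x,λ) = ((y,z),λ) with By + Cz = b, one has: β_k(L(x^{k+1},λ) − L(x,λ)) + (δβ_{k−1}²/(2γ))‖𝒜x^k − b‖² + (δβ_k²/2)‖C(z^{k+1}−z^k)‖² + (β_k/2)‖y^k−y^{k+1}‖²_{P_k} + (β_k²/2)‖z^k−z^{k+1}‖²_Q ≤ Φ_k(x,λ) − Φ_{k+1}(x,λ) − σ_gβ_k‖z^k−z^{k+1}‖² − (εσ_gβ_k/2)‖z−z^{k+1}‖². -/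
/-!
Write `r_k = B y^k + C z^k - b` and `d_k = z^{k+1} - z^k`. For a feasible `(yy, zz)` one has
`B (yy - y^{k+1}) = -r_{k+1} - C (zz - z^{k+1})`, so adding the two subgradient inequalities at
`x^{k+1}` tested at `(yy, zz)` and polarizing every inner product gives the telescoping differences
of the squared distances in `Φ`, the strong convexity term `-(σ_g β_k / 2) ‖zz - z^{k+1}‖²`, and one
cross term `β_k² ⟨C d_k, r_{k+1}⟩`. The change of weight from `β_k²` to `β_{k+1}²` in front of
`‖zz - z^{k+1}‖²_{CᵀC+Q}` costs at most `(1 - ε) σ_g β_k / 2 * ‖zz - z^{k+1}‖²`, because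
`lamMax` bounds the quadratic form (`quad_le_lamMax`) and `β` grows slowly (`penalty_growth`).

The cross term is controlled by strong monotonicity of the subdifferential of `g` at the
consecutive points `z^k`, `z^{k+1}` (`subgradient_strongly_monotone`): it is at most
`-(γ - 1) β_k β_{k-1} ⟨r_k, C d_k⟩ - β_k² ‖d_k‖²_Q + β_k β_{k-1} ⟨Q d_{k-1}, d_k⟩ - σ_g β_k ‖d_k‖²`.
Young's inequality with weight `γ` on the first product and weight `1` on the third finishes the
proof, since `γ (γ - 1) = 1 - δ` and `(2 - γ) - δ / γ = (γ - 1) / γ`.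
-/

open Matrix Filter

/-- Euclidean norm of a vector in `ℝ^n`. -/
noncomputable def vnorm {n : ℕ} (w : Fin n → ℝ) : ℝ := Real.sqrt (w ⬝ᵥ w)

/-- `ξ` is a subgradient of the convex function `h` at `u`. -/
def IsSubgradient {p : ℕ} (h : (Fin p → ℝ) → ℝ) (ξ u : Fin p → ℝ) : Prop :=
  ∀ w, h w ≥ h u + ξ ⬝ᵥ (w - u)

/-- The largest eigenvalue of a symmetric matrix, as the supremum of the
Rayleigh quotient over unit vectors. -/
noncomputable def lamMax {n : ℕ} (A : Matrix (Fin n) (Fin n) ℝ) : ℝ :=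
  sSup { r | ∃ w : Fin n → ℝ, w ⬝ᵥ w = 1 ∧ w ⬝ᵥ A *ᵥ w = r }

/-- The energy function `Φ_k(x,λ)` of the IADMM convergence analysis. -/
noncomputable def Phi {m n₁ n₂ : ℕ}
    (B : Matrix (Fin m) (Fin n₁) ℝ) (C : Matrix (Fin m) (Fin n₂) ℝ) (b : Fin m → ℝ)
    (Q : Matrix (Fin n₂) (Fin n₂) ℝ) (P : ℕ → Matrix (Fin n₁) (Fin n₁) ℝ)
    (β : ℕ → ℝ) (γ : ℝ)
    (y : ℕ → Fin n₁ → ℝ) (z : ℕ → Fin n₂ → ℝ) (lam : ℕ → Fin m → ℝ)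
    (k : ℕ) (yy : Fin n₁ → ℝ) (zz : Fin n₂ → ℝ) (ll : Fin m → ℝ) : ℝ :=
  1 / (2 * γ) * ((ll - lam k) ⬝ᵥ (ll - lam k))
  + (2 - γ) * β (k - 1) ^ 2 / 2 *
      ((B *ᵥ y k + C *ᵥ z k - b) ⬝ᵥ (B *ᵥ y k + C *ᵥ z k - b))
  + β k ^ 2 / 2 * ((zz - z k) ⬝ᵥ (Cᵀ * C + Q) *ᵥ (zz - z k))
  + β (k - 1) ^ 2 / 2 * ((z k - z (k - 1)) ⬝ᵥ Q *ᵥ (z k - z (k - 1)))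
  + β k / 2 * ((yy - y k) ⬝ᵥ P k *ᵥ (yy - y k))

/-- If the Rayleigh quotients were unbounded, the junk value `sSup = 0` would contradict
`0 < lamMax A`, so positivity alone makes `lamMax A` a genuine upper bound. -/
lemma quad_le_lamMax {n : ℕ} (A : Matrix (Fin n) (Fin n) ℝ) (h : 0 < lamMax A)
    (e : Fin n → ℝ) : e ⬝ᵥ A *ᵥ e ≤ lamMax A * (e ⬝ᵥ e) := by
  have hb : BddAbove { r | ∃ w : Fin n → ℝ, w ⬝ᵥ w = 1 ∧ w ⬝ᵥ A *ᵥ w = r } := by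
    by_contra hb
    rw [lamMax, Real.sSup_of_not_bddAbove hb] at h
    exact lt_irrefl _ h
  by_cases he : e = 0
  · simp [he]
  have hpos : 0 < e ⬝ᵥ e := by
    have h0 : 0 ≤ e ⬝ᵥ e := Finset.sum_nonneg fun i _ => mul_self_nonneg (e i)
    exact lt_of_le_of_ne h0 fun h' => he (dotProduct_self_eq_zero.mp h'.symm)
  set s := Real.sqrt (e ⬝ᵥ e) with hs
  have hs2 : s * s = e ⬝ᵥ e := Real.mul_self_sqrt hpos.le
  have hs0 : 0 < s := Real.sqrt_pos.mpr hpos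
  have key : (s⁻¹ • e) ⬝ᵥ A *ᵥ (s⁻¹ • e) ≤ lamMax A := by
    refine le_csSup hb ⟨s⁻¹ • e, ?_, rfl⟩
    rw [smul_dotProduct, dotProduct_smul, ← hs2]
    simp only [smul_eq_mul]
    field_simp
  rw [mulVec_smul, smul_dotProduct, dotProduct_smul, smul_eq_mul, smul_eq_mul] at key
  have h2 := mul_le_mul_of_nonneg_right key hpos.le
  calc e ⬝ᵥ A *ᵥ e = s⁻¹ * (s⁻¹ * (e ⬝ᵥ A *ᵥ e)) * (e ⬝ᵥ e) := by
        rw [← hs2]; field_simp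
    _ ≤ _ := h2

/-- The cost of replacing the penalty weight `b₀²` by `b₁²` in front of the quadratic form
of `A` is absorbed by the strong convexity modulus. -/
lemma penalty_growth {n : ℕ} (A : Matrix (Fin n) (Fin n) ℝ) (h : 0 < lamMax A)
    {b₀ b₁ ε σ : ℝ} (hb₀ : 0 < b₀) (hb₁ : 0 < b₁) (hε : ε < 1) (hσ : 0 < σ)
    (hb : b₁ ≤ Real.sqrt (b₀ ^ 2 + (1 - ε) * σ * b₀ / lamMax A))
    (e : Fin n → ℝ) (he : 0 ≤ e ⬝ᵥ A *ᵥ e) :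
    b₁ ^ 2 * (e ⬝ᵥ A *ᵥ e) ≤ b₀ ^ 2 * (e ⬝ᵥ A *ᵥ e) + (1 - ε) * σ * b₀ * (e ⬝ᵥ e) := by
  have h1 := (Real.le_sqrt' hb₁).mp hb
  have hc : 0 ≤ (1 - ε) * σ * b₀ := by
    have : 0 < 1 - ε := by linarith
    positivity
  have h2 := mul_le_mul_of_nonneg_right h1 he
  have h3 : (1 - ε) * σ * b₀ / lamMax A * (e ⬝ᵥ A *ᵥ e) ≤ (1 - ε) * σ * b₀ * (e ⬝ᵥ e) := by
    rw [div_mul_eq_mul_div, div_le_iff₀ h, mul_assoc _ (e ⬝ᵥ e), mul_comm (e ⬝ᵥ e)]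
    exact mul_le_mul_of_nonneg_left (quad_le_lamMax A h e) hc
  linarith [add_mul (b₀ ^ 2) ((1 - ε) * σ * b₀ / lamMax A) (e ⬝ᵥ A *ᵥ e)]

lemma subgradient_strongly_monotone {n : ℕ} {g : (Fin n → ℝ) → ℝ} {σ : ℝ}
    (hg : ∀ u ξ, IsSubgradient g ξ u → ∀ w,
        g w ≥ g u + ξ ⬝ᵥ (w - u) + σ / 2 * ((w - u) ⬝ᵥ (w - u)))
    {u v ξ η : Fin n → ℝ} (hu : IsSubgradient g ξ u) (hv : IsSubgradient g η v) :
    σ * ((v - u) ⬝ᵥ (v - u)) ≤ (η - ξ) ⬝ᵥ (v - u) := by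
  have h1 := hg u ξ hu v
  have h2 := hg v η hv u
  rw [← neg_sub v u, dotProduct_neg, dotProduct_neg, neg_dotProduct, neg_neg] at h2
  rw [sub_dotProduct η]
  linarith

lemma transpose_mulVec_dotProduct {m n : ℕ} (M : Matrix (Fin m) (Fin n) ℝ)
    (w : Fin m → ℝ) (v : Fin n → ℝ) : (Mᵀ *ᵥ w) ⬝ᵥ v = w ⬝ᵥ M *ᵥ v := by
  rw [mulVec_transpose, dotProduct_mulVec]

lemma posSemidef_dotProduct_comm {n : ℕ} {A : Matrix (Fin n) (Fin n) ℝ} (hA : A.PosSemidef)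
    (v w : Fin n → ℝ) : v ⬝ᵥ A *ᵥ w = w ⬝ᵥ A *ᵥ v := by
  have hT : Aᵀ = A := by simpa [conjTranspose_eq_transpose_of_trivial] using hA.isHermitian.eq
  rw [dotProduct_comm v, ← transpose_mulVec_dotProduct, hT, dotProduct_comm, dotProduct_comm,
    dotProduct_comm]

lemma quad_nonneg {n : ℕ} {A : Matrix (Fin n) (Fin n) ℝ} (hA : A.PosSemidef)
    (v : Fin n → ℝ) : 0 ≤ v ⬝ᵥ A *ᵥ v := by
  simpa using hA.dotProduct_mulVec_nonneg v

lemma quad_add {n : ℕ} {A : Matrix (Fin n) (Fin n) ℝ} (hA : A.PosSemidef)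
    (v w : Fin n → ℝ) :
    (v + w) ⬝ᵥ A *ᵥ (v + w) = v ⬝ᵥ A *ᵥ v + 2 * (v ⬝ᵥ A *ᵥ w) + w ⬝ᵥ A *ᵥ w := by
  rw [mulVec_add, add_dotProduct, dotProduct_add, dotProduct_add,
    posSemidef_dotProduct_comm hA w v]
  ring

/-- Young's inequality for a positive semidefinite form. -/
lemma quad_young {n : ℕ} {A : Matrix (Fin n) (Fin n) ℝ} (hA : A.PosSemidef)
    (s t : ℝ) (v w : Fin n → ℝ) :
    2 * (s * t * (v ⬝ᵥ A *ᵥ w)) ≤ s ^ 2 * (v ⬝ᵥ A *ᵥ v) + t ^ 2 * (w ⬝ᵥ A *ᵥ w) := by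
  have h := quad_nonneg hA (s • v + (-t) • w)
  rw [quad_add hA] at h
  simp only [mulVec_smul, smul_dotProduct, dotProduct_smul, smul_eq_mul] at h
  linarith

/-- Young's inequality with weight `γ` on the product `s * t * ⟨v, w⟩`. -/
lemma dot_young {n : ℕ} {γ : ℝ} (hγ : 0 < γ) (s t : ℝ) (v w : Fin n → ℝ) :
    -(2 * (s * t * (v ⬝ᵥ w))) ≤ s ^ 2 / γ * (v ⬝ᵥ v) + γ * t ^ 2 * (w ⬝ᵥ w) := by
  have h : 0 ≤ (s • v + (γ * t) • w) ⬝ᵥ (s • v + (γ * t) • w) :=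
    Finset.sum_nonneg fun i _ => mul_self_nonneg _
  simp only [add_dotProduct, dotProduct_add, smul_dotProduct, dotProduct_smul, smul_eq_mul] at h
  rw [dotProduct_comm w v] at h
  have h3 : (s * (s * (v ⬝ᵥ v)) + γ * t * (s * (v ⬝ᵥ w)) +
      (s * (γ * t * (v ⬝ᵥ w)) + γ * t * (γ * t * (w ⬝ᵥ w)))) / γ
      = s ^ 2 / γ * (v ⬝ᵥ v) + γ * t ^ 2 * (w ⬝ᵥ w) + 2 * (s * t * (v ⬝ᵥ w)) := by
    field_simp
    ring
  have h4 : 0 ≤ s ^ 2 / γ * (v ⬝ᵥ v) + γ * t ^ 2 * (w ⬝ᵥ w) + 2 * (s * t * (v ⬝ᵥ w)) := by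
    rw [← h3]
    exact div_nonneg (by linarith) hγ.le
  linarith

/-- Lemma 3.1 (one-step descent inequality for IADMM). -/
theorem iadmm_one_step_descent
    {m n₁ n₂ : ℕ}
    (B : Matrix (Fin m) (Fin n₁) ℝ) (C : Matrix (Fin m) (Fin n₂) ℝ) (b : Fin m → ℝ)
    (f : (Fin n₁ → ℝ) → ℝ) (g : (Fin n₂ → ℝ) → ℝ)
    (γ ε βlow τ σg : ℝ)
    (hγ : 1 < γ ∧ γ < (1 + Real.sqrt 5) / 2)
    (hε : 0 < ε ∧ ε < 1) (hβlow : 0 < βlow ∧ βlow < 1) (hτ : 0 < τ ∧ τ < 1)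
    (hσg : 0 < σg)
    (hf : ConvexOn ℝ Set.univ f) (hgconv : ConvexOn ℝ Set.univ g)
    (hgstr : ∀ u ξ, IsSubgradient g ξ u → ∀ w,
        g w ≥ g u + ξ ⬝ᵥ (w - u) + σg / 2 * ((w - u) ⬝ᵥ (w - u)))
    (Q : Matrix (Fin n₂) (Fin n₂) ℝ) (hQ : Q.PosSemidef)
    (hlamQ : 0 < lamMax (Cᵀ * C + Q))
    (β : ℕ → ℝ) (hβpos : ∀ k, 1 ≤ k → 0 < β k) (hβ1 : βlow ≤ β 1)
    (P : ℕ → Matrix (Fin n₁) (Fin n₁) ℝ) (hP : ∀ k, 1 ≤ k → (P k).PosSemidef)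
    (hPmono : ∀ k, 1 ≤ k → (β k • P k - β (k + 1) • P (k + 1)).PosSemidef)
    (hβlo : ∀ k, 1 ≤ k → max βlow (τ * β k) ≤ β (k + 1))
    (hβhi : ∀ k, 1 ≤ k →
      β (k + 1) ≤ Real.sqrt (β k ^ 2 + (1 - ε) * σg * β k / lamMax (Cᵀ * C + Q)))
    (y : ℕ → Fin n₁ → ℝ) (z : ℕ → Fin n₂ → ℝ) (lam : ℕ → Fin m → ℝ)
    (hiter₁ : ∀ k, 1 ≤ k → IsSubgradient f
        (-(Bᵀ *ᵥ lam k + β k • (Bᵀ *ᵥ (B *ᵥ y (k + 1) + C *ᵥ z k - b))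
            + P k *ᵥ (y (k + 1) - y k))) (y (k + 1)))
    (hiter₂ : ∀ k, 1 ≤ k → IsSubgradient g
        (-(Cᵀ *ᵥ lam k + β k • (Cᵀ *ᵥ (B *ᵥ y (k + 1) + C *ᵥ z (k + 1) - b))
            + β k • (Q *ᵥ (z (k + 1) - z k)))) (z (k + 1)))
    (hiter₃ : ∀ k, 1 ≤ k →
      lam (k + 1) = lam k + (γ * β k) • (B *ᵥ y (k + 1) + C *ᵥ z (k + 1) - b)) :
    ∀ k, 2 ≤ k → ∀ (yy : Fin n₁ → ℝ) (zz : Fin n₂ → ℝ) (ll : Fin m → ℝ),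
      B *ᵥ yy + C *ᵥ zz = b →
      β k * ((f (y (k + 1)) + g (z (k + 1)) + ll ⬝ᵥ (B *ᵥ y (k + 1) + C *ᵥ z (k + 1) - b))
              - (f yy + g zz + ll ⬝ᵥ (B *ᵥ yy + C *ᵥ zz - b)))
        + (1 + γ - γ ^ 2) * β (k - 1) ^ 2 / (2 * γ) *
            ((B *ᵥ y k + C *ᵥ z k - b) ⬝ᵥ (B *ᵥ y k + C *ᵥ z k - b))
        + (1 + γ - γ ^ 2) * β k ^ 2 / 2 *
            ((C *ᵥ (z (k + 1) - z k)) ⬝ᵥ (C *ᵥ (z (k + 1) - z k)))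
        + β k / 2 * ((y k - y (k + 1)) ⬝ᵥ P k *ᵥ (y k - y (k + 1)))
        + β k ^ 2 / 2 * ((z k - z (k + 1)) ⬝ᵥ Q *ᵥ (z k - z (k + 1)))
      ≤ Phi B C b Q P β γ y z lam k yy zz ll
        - Phi B C b Q P β γ y z lam (k + 1) yy zz ll
        - σg * β k * ((z k - z (k + 1)) ⬝ᵥ (z k - z (k + 1)))
        - ε * σg * β k / 2 * ((zz - z (k + 1)) ⬝ᵥ (zz - z (k + 1))) := by
  intro k hk yy zz ll hfeas
  obtain ⟨j, rfl⟩ : ∃ j, k = j + 1 := ⟨k - 1, by omega⟩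
  have hj : 1 ≤ j := by omega
  have hk1 : 1 ≤ j + 1 := by omega
  have hγ0 : 0 < γ := by linarith [hγ.1]
  have hβ := hβpos (j + 1) hk1
  simp only [Phi, Nat.add_sub_cancel]
  have hf1 := hiter₁ (j + 1) hk1 yy
  have hg1 := hgstr _ _ (hiter₂ (j + 1) hk1) zz
  have hmono := subgradient_strongly_monotone hgstr (hiter₂ j hj) (hiter₂ (j + 1) hk1)
  have hl0 := hiter₃ j hj
  have hl1 := hiter₃ (j + 1) hk1
  have hPm := quad_nonneg (hPmono (j + 1) hk1) (yy - y (j + 1 + 1))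
  have hM : (Cᵀ * C + Q).PosSemidef := by
    have h := posSemidef_conjTranspose_mul_self C
    rw [conjTranspose_eq_transpose_of_trivial] at h
    exact h.add hQ
  have hgrow := penalty_growth _ hlamQ hβ (hβpos (j + 1 + 1) (by omega)) hε.2 hσg
    (hβhi (j + 1) hk1) (zz - z (j + 1 + 1)) (quad_nonneg hM _)
  -- Residuals and increments: `R`, `R₀` are the residuals at the new and the current iterate.
  generalize hR : B *ᵥ y (j + 1 + 1) + C *ᵥ z (j + 1 + 1) - b = R at *
  generalize hR₀ : B *ᵥ y (j + 1) + C *ᵥ z (j + 1) - b = R₀ at *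
  generalize hd : z (j + 1 + 1) - z (j + 1) = d at *
  generalize hd₀ : z (j + 1) - z j = d₀ at *
  generalize he : zz - z (j + 1 + 1) = e at *
  generalize hv : yy - y (j + 1 + 1) = v at *
  generalize hu : y (j + 1 + 1) - y (j + 1) = u at *
  have hBv : B *ᵥ v = -R - C *ᵥ e := by
    rw [← hv, ← he, ← hR, ← hfeas, mulVec_sub, mulVec_sub]
    abel
  have hRd : B *ᵥ y (j + 1 + 1) + C *ᵥ z (j + 1) - b = R - C *ᵥ d := by
    rw [← hd, ← hR, mulVec_sub]
    abel
  have hfeas' : B *ᵥ yy + C *ᵥ zz - b = 0 := by rw [hfeas, sub_self]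
  have hzz : zz - z (j + 1) = e + d := by rw [← he, ← hd]; abel
  have hyy : yy - y (j + 1) = v + u := by rw [← hv, ← hu]; abel
  have hd' : z (j + 1) - z (j + 1 + 1) = -d := by rw [← hd, neg_sub]
  have hu' : y (j + 1) - y (j + 1 + 1) = -u := by rw [← hu, neg_sub]
  have hll : ll - lam (j + 1 + 1) = (ll - lam (j + 1)) - (γ * β (j + 1)) • R := by
    rw [hl1]; abel
  have hlam : lam (j + 1) = lam j + (γ * β j) • R₀ := hl0
  generalize hμ : ll - lam (j + 1) = μ at *
  have hlam1 : lam (j + 1) = ll - μ := by rw [← hμ]; abel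
  have hlam0 : lam j = ll - μ - (γ * β j) • R₀ := by rw [← hlam1, hlam]; abel
  have hyoungQ := quad_young hQ (β (j + 1)) (β j) d d₀
  have hyoungC := dot_young hγ0 (β j) (β (j + 1)) R₀ (C *ᵥ d)
  rw [hRd, hlam1] at hf1
  rw [hlam1] at hg1
  rw [hlam1, hlam0] at hmono
  rw [hfeas', hzz, hyy, hd', hu', hll, quad_add hM, quad_add (hP (j + 1) hk1)]
  have hMq : ∀ p q : Fin n₂ → ℝ,
      p ⬝ᵥ (Cᵀ * C + Q) *ᵥ q = (C *ᵥ p) ⬝ᵥ (C *ᵥ q) + p ⬝ᵥ Q *ᵥ q := by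
    intro p q
    rw [add_mulVec, dotProduct_add, ← mulVec_mulVec, dotProduct_comm p (Cᵀ *ᵥ _),
      transpose_mulVec_dotProduct, dotProduct_comm (C *ᵥ q)]
  simp only [hMq] at hgrow ⊢
  simp only [neg_dotProduct, dotProduct_neg, add_dotProduct, sub_dotProduct, dotProduct_sub,
    smul_dotProduct, dotProduct_smul, smul_eq_mul, mulVec_neg, mulVec_sub,
    mulVec_smul, sub_mulVec, smul_mulVec, transpose_mulVec_dotProduct, hBv,
    dotProduct_zero, smul_sub] at hf1 hg1 hmono hPm hgrow ⊢
  rw [dotProduct_comm (C *ᵥ d) R, dotProduct_comm (C *ᵥ d) (C *ᵥ e),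
    dotProduct_comm (P (j + 1) *ᵥ u) v] at hf1
  rw [dotProduct_comm (Q *ᵥ d) e] at hg1
  rw [dotProduct_comm (Q *ᵥ d) d, dotProduct_comm (Q *ᵥ d₀) d] at hmono
  rw [dotProduct_comm R μ]
  -- Weights: the three variational inequalities are scaled by `β_k`; the Young inequalities by
  -- `1 / 2` and `(γ - 1) / 2`, the latter nonnegative because `1 < γ`.
  have hf2 := mul_le_mul_of_nonneg_left hf1 hβ.le
  have hg2 := mul_le_mul_of_nonneg_left hg1 hβ.le
  have hm2 := mul_le_mul_of_nonneg_left hmono hβ.le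
  have hy2 := mul_le_mul_of_nonneg_left hyoungC (show 0 ≤ (γ - 1) / 2 by linarith [hγ.1])
  have hi : γ * γ⁻¹ = 1 := mul_inv_cancel₀ hγ0.ne'
  linear_combination hf2 + hg2 + hm2 + hy2 + hyoungQ / 2 + hPm / 2 + hgrow / 2
    + (β j ^ 2 * (2 - γ) / 2 * (R₀ ⬝ᵥ R₀) - β (j + 1) * (μ ⬝ᵥ R)
      + γ * β (j + 1) ^ 2 / 2 * (R ⬝ᵥ R)) * hi
end

section
/- (Lemma 3.2.) Let (x*,λ*) = ((y*,z*),λ*) be a KKT solution of problem (P), let D : ℝ^m → ℝ be a continuous function, let h : ℕ → ℝ satisfy h(k) ≥ 0 for all k, and let x^k = (y^k,z^k) ∈ ℝ^{n₁}×ℝ^{n₂} be a sequence such that L(x^k,λ) − L(x*,λ) ≤ h(k)·D(λ) for every k and every λ ∈ ℝ^m. Then there exists a constant c ≥ 0 such that for all k: ‖𝒜x^k − b‖ ≤ c·h(k) and |F(x^k) − F(x*)| ≤ c·h(k). -/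
/-!
Write `r` for the feasibility residual, `d` for the objective gap and `t` for the value `h k`.
The bound reads `d + ⟨λ, r⟩ ≤ t D(λ)` for every `λ`, and the KKT conditions give the saddle-point
inequality `0 ≤ d + ⟨λ*, r⟩`. Three choices of `λ` then suffice:
`λ = λ* + r / ‖r‖` gives `‖r‖ ≤ t D(λ)`, where `D` is bounded on the compact cube of radius one
around `λ*`; `λ = 0` gives `d ≤ t D(0)`; and `λ = 2 λ*` gives `⟨λ*, r⟩ ≤ t D(2 λ*)`, hence
`d ≥ -t D(2 λ*)`.
-/

open Matrix Filter

/-- The direction `r / ‖r‖` lies in the unit cube and pairs with `r` to `‖r‖`; for `r = 0` the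
direction is `0`. -/
lemma exists_dual_direction {m : ℕ} (r : Fin m → ℝ) :
    ∃ u ∈ Set.Icc (-1 : Fin m → ℝ) 1, u ⬝ᵥ r = vnorm r := by
  have h0 : 0 ≤ r ⬝ᵥ r := Finset.sum_nonneg fun i _ => mul_self_nonneg (r i)
  have hv : 0 ≤ vnorm r := Real.sqrt_nonneg _
  have hsq : vnorm r * vnorm r = r ⬝ᵥ r := Real.mul_self_sqrt h0
  have hle (i : Fin m) : |r i| ≤ vnorm r := by
    refine Real.abs_le_sqrt ?_
    rw [sq]
    exact Finset.single_le_sum (f := fun j => r j * r j)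
      (fun j _ => mul_self_nonneg (r j)) (Finset.mem_univ i)
  have hu (i : Fin m) : |(vnorm r)⁻¹ * r i| ≤ 1 := by
    rw [abs_mul, abs_inv, abs_of_nonneg hv, inv_mul_eq_div]
    exact div_le_one_of_le₀ (hle i) hv
  refine ⟨(vnorm r)⁻¹ • r, ⟨fun i => (abs_le.1 (hu i)).1, fun i => (abs_le.1 (hu i)).2⟩, ?_⟩
  rw [smul_dotProduct, smul_eq_mul, ← hsq]
  rcases eq_or_ne (vnorm r) 0 with hz | hz
  · simp [hz]
  · field_simp

/-- The saddle-point inequality `L(x*, λ*) ≤ L(x, λ*)` at a KKT solution. -/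
lemma kkt_saddle {m n₁ n₂ : ℕ}
    {B : Matrix (Fin m) (Fin n₁) ℝ} {C : Matrix (Fin m) (Fin n₂) ℝ} {b : Fin m → ℝ}
    {f : (Fin n₁ → ℝ) → ℝ} {g : (Fin n₂ → ℝ) → ℝ}
    {ystar : Fin n₁ → ℝ} {zstar : Fin n₂ → ℝ} {lamstar : Fin m → ℝ}
    (h₁ : IsSubgradient f (-(Bᵀ *ᵥ lamstar)) ystar)
    (h₂ : IsSubgradient g (-(Cᵀ *ᵥ lamstar)) zstar)
    (h₃ : B *ᵥ ystar + C *ᵥ zstar = b) (y : Fin n₁ → ℝ) (z : Fin n₂ → ℝ) :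
    0 ≤ (f y + g z) - (f ystar + g zstar) + lamstar ⬝ᵥ (B *ᵥ y + C *ᵥ z - b) := by
  have e₁ := h₁ y
  have e₂ := h₂ z
  rw [neg_dotProduct, mulVec_transpose, ← dotProduct_mulVec, mulVec_sub, dotProduct_sub]
    at e₁ e₂
  rw [← h₃, dotProduct_sub, dotProduct_add, dotProduct_add]
  linarith

/-- Lemma 3.2: if `L(x^k,λ) − L(x*,λ) ≤ h(k)·D(λ)` for all `λ`, then both the
feasibility residual and the objective gap are `O(h(k))`. -/
theorem lemma_3_2
    {m n₁ n₂ : ℕ}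
    (B : Matrix (Fin m) (Fin n₁) ℝ) (C : Matrix (Fin m) (Fin n₂) ℝ) (b : Fin m → ℝ)
    (f : (Fin n₁ → ℝ) → ℝ) (g : (Fin n₂ → ℝ) → ℝ)
    (hf : ConvexOn ℝ Set.univ f) (hg : ConvexOn ℝ Set.univ g)
    (ystar : Fin n₁ → ℝ) (zstar : Fin n₂ → ℝ) (lamstar : Fin m → ℝ)
    (hKKT₁ : IsSubgradient f (-(Bᵀ *ᵥ lamstar)) ystar)
    (hKKT₂ : IsSubgradient g (-(Cᵀ *ᵥ lamstar)) zstar)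
    (hKKT₃ : B *ᵥ ystar + C *ᵥ zstar = b)
    (D : (Fin m → ℝ) → ℝ) (hD : Continuous D)
    (h : ℕ → ℝ) (hh : ∀ k, 0 ≤ h k)
    (y : ℕ → Fin n₁ → ℝ) (z : ℕ → Fin n₂ → ℝ)
    (hbound : ∀ k, ∀ lam : Fin m → ℝ,
      (f (y k) + g (z k) + lam ⬝ᵥ (B *ᵥ y k + C *ᵥ z k - b))
        - (f ystar + g zstar + lam ⬝ᵥ (B *ᵥ ystar + C *ᵥ zstar - b)) ≤ h k * D lam) :
    ∃ c : ℝ, 0 ≤ c ∧ ∀ k,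
      vnorm (B *ᵥ y k + C *ᵥ z k - b) ≤ c * h k ∧
      |(f (y k) + g (z k)) - (f ystar + g zstar)| ≤ c * h k := by
  obtain ⟨M, hM⟩ := ((isCompact_Icc (a := (-1 : Fin m → ℝ)) (b := 1)).image
    (hD.comp (continuous_const.add continuous_id : Continuous fun u => lamstar + u))).bddAbove
  refine ⟨|M| + |D 0| + |D ((2 : ℝ) • lamstar)|, by positivity, fun k => ?_⟩
  have hs := kkt_saddle hKKT₁ hKKT₂ hKKT₃ (y k) (z k)
  have hb := hbound k
  simp only [hKKT₃, sub_self, dotProduct_zero, add_zero] at hb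
  set r := B *ᵥ y k + C *ᵥ z k - b
  obtain ⟨u, hu, hur⟩ := exists_dual_direction r
  have b₁ := hb (lamstar + u)
  have b₂ := hb 0
  have b₃ := hb ((2 : ℝ) • lamstar)
  rw [add_dotProduct, hur] at b₁
  rw [zero_dotProduct] at b₂
  rw [smul_dotProduct, smul_eq_mul] at b₃
  have m₁ : h k * D (lamstar + u) ≤ h k * |M| :=
    mul_le_mul_of_nonneg_left ((hM ⟨u, hu, rfl⟩).trans (le_abs_self M)) (hh k)
  have m₂ := mul_le_mul_of_nonneg_left (le_abs_self (D 0)) (hh k)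
  have m₃ := mul_le_mul_of_nonneg_left (le_abs_self (D ((2 : ℝ) • lamstar))) (hh k)
  have p₁ := mul_nonneg (hh k) (abs_nonneg M)
  have p₂ := mul_nonneg (hh k) (abs_nonneg (D 0))
  have p₃ := mul_nonneg (hh k) (abs_nonneg (D ((2 : ℝ) • lamstar)))
  refine ⟨by linarith, abs_le.2 ⟨by linarith, by linarith⟩⟩
end

section
/- (Dual-variable bound, Lemma 3.7.) Assume the IADMM setting with P_k = 0 for all k, and suppose in addition g is differentiable with ∇g Lipschitz continuous with constant L_g. Let (x*,λ*) = ((y*,z*),λ*) be a KKT solution of problem (P). Then for every α with 0 < α < 1/2 and every k ≥ 1: (1−2α)λ_min(CCᵀ)‖λ^{k+1}−λ*‖² ≤ (1/α)λ_max(CCᵀ)(1−γ)²β_k²‖𝒜x^{k+1}−b‖² + (1/α)λ_max(Q)β_k²‖z^{k+1}−z^k‖²_Q + L_g²‖z^{k+1}−z*‖². -/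
/-!
Write `r = B y⁺ + C z⁺ - b` and `s = z⁺ - z`, where `⁺` marks the iterate `k + 1`. Every subgradient
of the differentiable function `g` is its gradient, so the optimality condition for `z⁺`, the
multiplier update and the KKT condition for `z*` give
`Cᵀ (λ⁺ - λ*) + (1 - γ) β Cᵀ r + β Q s = -(∇g z⁺ - ∇g z*)`.
Young's inequality, used once for each of the two cross terms that involve `Cᵀ (λ⁺ - λ*)`, yields
`(1 - 2α) ‖Cᵀ (λ⁺ - λ*)‖² ≤ ‖(1 - γ) β Cᵀ r‖² / α + ‖β Q s‖² / α + ‖∇g z⁺ - ∇g z*‖²`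
(`young_three`). The claim follows from the Rayleigh bounds for `C Cᵀ`, the inequality
`‖Q s‖² ≤ λ_max(Q) ⟨s, Q s⟩` for positive semidefinite `Q` (`mulVec_sq_le`), and the Lipschitz
bound on the gradient.
-/

open Matrix Filter

/-- The smallest eigenvalue of a symmetric matrix, as the infimum of the
Rayleigh quotient over unit vectors. -/
noncomputable def lamMin {n : ℕ} (A : Matrix (Fin n) (Fin n) ℝ) : ℝ :=
  sInf { r | ∃ w : Fin n → ℝ, w ⬝ᵥ w = 1 ∧ w ⬝ᵥ A *ᵥ w = r }

theorem dot_self_nonneg {n : ℕ} (w : Fin n → ℝ) : 0 ≤ w ⬝ᵥ w :=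
  Finset.sum_nonneg fun i _ => mul_self_nonneg (w i)

theorem rayleigh_bddAbove {n : ℕ} (A : Matrix (Fin n) (Fin n) ℝ) :
    BddAbove { r | ∃ w : Fin n → ℝ, w ⬝ᵥ w = 1 ∧ w ⬝ᵥ A *ᵥ w = r } := by
  refine ⟨∑ i, ∑ j, |A i j|, ?_⟩
  rintro _ ⟨w, hw, rfl⟩
  have h1 : ∀ i, |w i| ≤ 1 := fun i => by
    have h : w i * w i ≤ w ⬝ᵥ w :=
      Finset.single_le_sum (f := fun i => w i * w i) (fun i _ => mul_self_nonneg (w i))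
        (Finset.mem_univ i)
    exact abs_le_one_iff_mul_self_le_one.mpr (hw ▸ h)
  simp only [dotProduct, mulVec, Finset.mul_sum]
  refine Finset.sum_le_sum fun i _ => Finset.sum_le_sum fun j _ => (le_abs_self _).trans ?_
  rw [abs_mul, abs_mul]
  calc |w i| * (|A i j| * |w j|) ≤ 1 * (|A i j| * 1) := by
        gcongr
        · exact h1 i
        · exact h1 j
    _ = |A i j| := by ring

/-- Normalizing a nonzero vector puts its Rayleigh quotient into the set that defines `lamMax` and
`lamMin`. -/
theorem rayleigh_mem {n : ℕ} (A : Matrix (Fin n) (Fin n) ℝ) (w : Fin n → ℝ)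
    (hw : 0 < w ⬝ᵥ w) :
    (w ⬝ᵥ A *ᵥ w) / (w ⬝ᵥ w) ∈
      { r | ∃ w : Fin n → ℝ, w ⬝ᵥ w = 1 ∧ w ⬝ᵥ A *ᵥ w = r } := by
  have hs : Real.sqrt (w ⬝ᵥ w) ≠ 0 := (Real.sqrt_pos.mpr hw).ne'
  have hsq := Real.mul_self_sqrt hw.le
  refine ⟨(Real.sqrt (w ⬝ᵥ w))⁻¹ • w, ?_, ?_⟩ <;>
    simp only [mulVec_smul, smul_dotProduct, dotProduct_smul, smul_eq_mul, ← mul_assoc,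
      ← mul_inv, hsq]
  · exact inv_mul_cancel₀ hw.ne'
  · rw [div_eq_inv_mul]

theorem rayleigh_le {n : ℕ} (A : Matrix (Fin n) (Fin n) ℝ) (w : Fin n → ℝ) :
    w ⬝ᵥ A *ᵥ w ≤ lamMax A * (w ⬝ᵥ w) := by
  rcases (dot_self_nonneg w).eq_or_lt with h | h
  · have : w = 0 := dotProduct_self_eq_zero.mp h.symm
    simp [this]
  · exact (div_le_iff₀ h).mp (le_csSup (rayleigh_bddAbove A) (rayleigh_mem A w h))

theorem dot_mul_transpose {m n : ℕ} (C : Matrix (Fin m) (Fin n) ℝ) (w : Fin m → ℝ) :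
    w ⬝ᵥ (C * Cᵀ) *ᵥ w = (Cᵀ *ᵥ w) ⬝ᵥ (Cᵀ *ᵥ w) := by
  rw [← mulVec_mulVec, dotProduct_mulVec, mulVec_transpose]

theorem le_rayleigh {m n : ℕ} (C : Matrix (Fin m) (Fin n) ℝ) (w : Fin m → ℝ) :
    lamMin (C * Cᵀ) * (w ⬝ᵥ w) ≤ (Cᵀ *ᵥ w) ⬝ᵥ (Cᵀ *ᵥ w) := by
  rw [← dot_mul_transpose]
  rcases (dot_self_nonneg w).eq_or_lt with h | h
  · have : w = 0 := dotProduct_self_eq_zero.mp h.symm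
    simp [this]
  · refine (le_div_iff₀ h).mp (csInf_le ⟨0, ?_⟩ (rayleigh_mem _ w h))
    rintro _ ⟨v, -, rfl⟩
    rw [dot_mul_transpose]
    exact dot_self_nonneg _

/-- The inequality `Q² ⪯ λ_max(Q) Q`. Cauchy–Schwarz for the form of `Q`, applied to `w` and
`t = Q w`, gives `‖t‖⁴ ≤ ⟨t, Q t⟩ ⟨w, Q w⟩ ≤ λ_max(Q) ‖t‖² ⟨w, Q w⟩`. -/
theorem mulVec_sq_le {n : ℕ} (Q : Matrix (Fin n) (Fin n) ℝ) (hQ : Q.PosSemidef)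
    (w : Fin n → ℝ) :
    (Q *ᵥ w) ⬝ᵥ (Q *ᵥ w) ≤ lamMax Q * (w ⬝ᵥ Q *ᵥ w) := by
  have hpos : ∀ v : Fin n → ℝ, 0 ≤ v ⬝ᵥ Q *ᵥ v := fun v => by
    simpa using hQ.dotProduct_mulVec_nonneg v
  have hT : Qᵀ = Q := by
    rw [← conjTranspose_eq_transpose_of_trivial]
    exact hQ.1
  have hsymm : ∀ u v : Fin n → ℝ, u ⬝ᵥ Q *ᵥ v = (Q *ᵥ u) ⬝ᵥ v := fun u v => by
    rw [dotProduct_mulVec, ← mulVec_transpose, hT]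
  set t := Q *ᵥ w with ht
  have hwt : w ⬝ᵥ Q *ᵥ t = t ⬝ᵥ t := by rw [hsymm]
  have hcs : discrim (t ⬝ᵥ Q *ᵥ t) (2 * (t ⬝ᵥ t)) (w ⬝ᵥ t) ≤ 0 := by
    refine discrim_le_zero fun x => ?_
    have h := hpos (w + x • t)
    simp only [mulVec_add, mulVec_smul, dotProduct_add, add_dotProduct, smul_dotProduct,
      dotProduct_smul, smul_eq_mul, ← ht, hwt] at h
    linarith
  rw [discrim] at hcs
  have hmax := rayleigh_le Q t
  have hw := hpos w
  rw [← ht] at hw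
  have htt := dot_self_nonneg t
  rcases htt.eq_or_lt with h0 | h0
  · have : t = 0 := dotProduct_self_eq_zero.mp h0.symm
    simp [this]
  · have := mul_le_mul_of_nonneg_right hmax hw
    refine le_of_mul_le_mul_left ?_ h0
    nlinarith

theorem subgradient_eq_grad {n : ℕ} {g : (Fin n → ℝ) → ℝ} (hg : Differentiable ℝ g)
    {gradg : (Fin n → ℝ) → (Fin n → ℝ)} (hgrad : ∀ u w, fderiv ℝ g u w = gradg u ⬝ᵥ w)
    {ξ u : Fin n → ℝ} (h : IsSubgradient g ξ u) : gradg u = ξ := by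
  let l : (Fin n → ℝ) →L[ℝ] ℝ := LinearMap.toContinuousLinearMap (dotProductBilin ℝ ℝ ξ)
  have hl : ∀ w, l w = ξ ⬝ᵥ w := fun w => rfl
  -- Subtracting the supporting linear form leaves a function minimized at `u`.
  have hmin : IsLocalMin (fun w => g w - l w) u := Filter.Eventually.of_forall fun w => by
    have := h w
    simp only [hl]
    rw [dotProduct_sub] at this
    linarith
  have h0 := hmin.hasFDerivAt_eq_zero ((hg u).hasFDerivAt.sub l.hasFDerivAt)
  refine dotProduct_eq _ _ fun w => ?_
  have := DFunLike.congr_fun h0 w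
  rw [_root_.sub_apply, hgrad, hl] at this
  simpa [sub_eq_zero] using this

theorem vnorm_sq {n : ℕ} (w : Fin n → ℝ) : vnorm w ^ 2 = w ⬝ᵥ w :=
  Real.sq_sqrt (dot_self_nonneg w)

theorem young_two {n : ℕ} (p u : Fin n → ℝ) {α : ℝ} (hα : 0 < α) :
    0 ≤ α * (p ⬝ᵥ p) + 2 * (p ⬝ᵥ u) + 1 / α * (u ⬝ᵥ u) := by
  have h := mul_nonneg (one_div_pos.mpr hα).le (dot_self_nonneg (α • p + u))
  simp only [dotProduct_add, add_dotProduct, smul_dotProduct, dotProduct_smul, smul_eq_mul,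
    dotProduct_comm u p] at h
  linear_combination h + (α * (p ⬝ᵥ p) + 2 * (p ⬝ᵥ u)) * (one_div_mul_cancel hα.ne')

theorem young_three {n : ℕ} (p u v : Fin n → ℝ) {α : ℝ} (hα : 0 < α) :
    (1 - 2 * α) * (p ⬝ᵥ p) ≤
      1 / α * (u ⬝ᵥ u) + 1 / α * (v ⬝ᵥ v) + (p + u + v) ⬝ᵥ (p + u + v) := by
  have h1 := young_two p u hα
  have h2 := young_two p v hα
  have h3 := dot_self_nonneg (u + v)
  simp only [dotProduct_add, add_dotProduct, dotProduct_comm u p, dotProduct_comm v p,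
    dotProduct_comm v u] at h3 ⊢
  linarith

/-- Lemma 3.7 (dual-variable bound for IADMM with `P_k = 0` and `∇g`
Lipschitz). -/
theorem iadmm_dual_bound
    {m n₁ n₂ : ℕ}
    (B : Matrix (Fin m) (Fin n₁) ℝ) (C : Matrix (Fin m) (Fin n₂) ℝ) (b : Fin m → ℝ)
    (f : (Fin n₁ → ℝ) → ℝ) (g : (Fin n₂ → ℝ) → ℝ)
    (γ ε βlow τ σg : ℝ)
    (hγ : 1 < γ ∧ γ < (1 + Real.sqrt 5) / 2)
    (hε : 0 < ε ∧ ε < 1) (hβlow : 0 < βlow ∧ βlow < 1) (hτ : 0 < τ ∧ τ < 1)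
    (hσg : 0 < σg)
    (hf : ConvexOn ℝ Set.univ f) (hgconv : ConvexOn ℝ Set.univ g)
    (hgstr : ∀ u ξ, IsSubgradient g ξ u → ∀ w,
        g w ≥ g u + ξ ⬝ᵥ (w - u) + σg / 2 * ((w - u) ⬝ᵥ (w - u)))
    (Q : Matrix (Fin n₂) (Fin n₂) ℝ) (hQ : Q.PosSemidef)
    (hlamQ : 0 < lamMax (Cᵀ * C + Q))
    (β : ℕ → ℝ) (hβpos : ∀ k, 1 ≤ k → 0 < β k) (hβ1 : βlow ≤ β 1)
    (hβlo : ∀ k, 1 ≤ k → max βlow (τ * β k) ≤ β (k + 1))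
    (hβhi : ∀ k, 1 ≤ k →
      β (k + 1) ≤ Real.sqrt (β k ^ 2 + (1 - ε) * σg * β k / lamMax (Cᵀ * C + Q)))
    (y : ℕ → Fin n₁ → ℝ) (z : ℕ → Fin n₂ → ℝ) (lam : ℕ → Fin m → ℝ)
    -- iterate conditions with `P_k = 0`
    (hiter₁ : ∀ k, 1 ≤ k → IsSubgradient f
        (-(Bᵀ *ᵥ lam k + β k • (Bᵀ *ᵥ (B *ᵥ y (k + 1) + C *ᵥ z k - b)))) (y (k + 1)))
    (hiter₂ : ∀ k, 1 ≤ k → IsSubgradient g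
        (-(Cᵀ *ᵥ lam k + β k • (Cᵀ *ᵥ (B *ᵥ y (k + 1) + C *ᵥ z (k + 1) - b))
            + β k • (Q *ᵥ (z (k + 1) - z k)))) (z (k + 1)))
    (hiter₃ : ∀ k, 1 ≤ k →
      lam (k + 1) = lam k + (γ * β k) • (B *ᵥ y (k + 1) + C *ᵥ z (k + 1) - b))
    -- `g` differentiable with `L_g`-Lipschitz gradient
    (hgdiff : Differentiable ℝ g)
    (gradg : (Fin n₂ → ℝ) → (Fin n₂ → ℝ))
    (hgrad : ∀ u w, fderiv ℝ g u w = gradg u ⬝ᵥ w)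
    (Lg : ℝ) (hLg : 0 ≤ Lg)
    (hLip : ∀ u v, vnorm (gradg u - gradg v) ≤ Lg * vnorm (u - v))
    -- a KKT solution
    (ystar : Fin n₁ → ℝ) (zstar : Fin n₂ → ℝ) (lamstar : Fin m → ℝ)
    (hKKT₁ : IsSubgradient f (-(Bᵀ *ᵥ lamstar)) ystar)
    (hKKT₂ : IsSubgradient g (-(Cᵀ *ᵥ lamstar)) zstar)
    (hKKT₃ : B *ᵥ ystar + C *ᵥ zstar = b) :
    ∀ α : ℝ, 0 < α → α < 1 / 2 → ∀ k, 1 ≤ k →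
      (1 - 2 * α) * lamMin (C * Cᵀ) *
          ((lam (k + 1) - lamstar) ⬝ᵥ (lam (k + 1) - lamstar))
      ≤ (1 / α) * lamMax (C * Cᵀ) * (1 - γ) ^ 2 * β k ^ 2 *
            ((B *ᵥ y (k + 1) + C *ᵥ z (k + 1) - b) ⬝ᵥ (B *ᵥ y (k + 1) + C *ᵥ z (k + 1) - b))
        + (1 / α) * lamMax Q * β k ^ 2 *
            ((z (k + 1) - z k) ⬝ᵥ Q *ᵥ (z (k + 1) - z k))
        + Lg ^ 2 * ((z (k + 1) - zstar) ⬝ᵥ (z (k + 1) - zstar)) := by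
  intro α hα hα2 k hk
  have hg1 := subgradient_eq_grad hgdiff hgrad (hiter₂ k hk)
  have hg2 := subgradient_eq_grad hgdiff hgrad hKKT₂
  have hlam := hiter₃ k hk
  have hL := hLip (z (k + 1)) zstar
  set r := B *ᵥ y (k + 1) + C *ᵥ z (k + 1) - b
  set s := z (k + 1) - z k
  set d := gradg (z (k + 1)) - gradg zstar with hd
  set p := Cᵀ *ᵥ (lam (k + 1) - lamstar) with hp
  have hsum : p + ((1 - γ) * β k) • (Cᵀ *ᵥ r) + β k • (Q *ᵥ s) = -d := by
    rw [hp, hd, hg1, hg2, hlam]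
    simp only [mulVec_sub, mulVec_add, mulVec_smul]
    module
  have hY := young_three p (((1 - γ) * β k) • (Cᵀ *ᵥ r)) (β k • (Q *ᵥ s)) hα
  rw [hsum] at hY
  simp only [smul_dotProduct, dotProduct_smul, smul_eq_mul, neg_dotProduct, dotProduct_neg,
    neg_neg] at hY
  have hdd : d ⬝ᵥ d ≤ Lg ^ 2 * ((z (k + 1) - zstar) ⬝ᵥ (z (k + 1) - zstar)) := by
    rw [← vnorm_sq, ← vnorm_sq, ← mul_pow]
    exact pow_le_pow_left₀ (Real.sqrt_nonneg _) hL 2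
  have hpp := mul_le_mul_of_nonneg_left (le_rayleigh C (lam (k + 1) - lamstar))
    (by linarith : 0 ≤ 1 - 2 * α)
  have hr := rayleigh_le (C * Cᵀ) r
  rw [dot_mul_transpose] at hr
  have hr' := mul_le_mul_of_nonneg_left hr
    (by positivity : 0 ≤ 1 / α * ((1 - γ) ^ 2 * β k ^ 2))
  have hs' := mul_le_mul_of_nonneg_left (mulVec_sq_le Q hQ s)
    (by positivity : 0 ≤ 1 / α * β k ^ 2)
  rw [← hp] at hpp
  linarith
end
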